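/- Let u be a pair potential that is stable with constant B ≥ 0 and regular, let Λ ⊂ ℝ^d be bounded and measurable, and assume Ξ_Λ(z) ≠ 0 for all |z| < z₀. Then for every n ≥ 1, all x_1,…,x_n ∈ Λ and every z ∈ ℂ with 0 < |z| < z₀, the function w ↦ θ_Λ^{(n)}(w; x_1,…,x_n)/w^n is differentiable at z and z^{n+1} · (d/dz)[θ_Λ^{(n)}(z; x_1,…,x_n)/z^n] = ∫_Λ θ_Λ^{(n+1)}(z; x_1,…,x_n, x) dx − θ_Λ^{(n)}(z; x_1,…,x_n) · ∫_Λ θ_Λ^{(1)}(z; x) dx. -/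

import Mathlib

open MeasureTheory Bornology

noncomputable section

/-- Boltzmann factor `e^{-β t}` with the convention `e^{-β(+∞)} = 0`. -/
def boltz (β : ℝ) (t : EReal) : ℝ :=
  if t = ⊤ then 0 else Real.exp (-β * t.toReal)

/-- Hamiltonian of a pair potential: `H(x₁,…,xₙ) = ∑_{i<j} u(xᵢ - xⱼ)`. -/
def Ham {d : ℕ} (u : (Fin d → ℝ) → EReal) (n : ℕ) (x : Fin n → (Fin d → ℝ)) : EReal :=
  ∑ p ∈ Finset.univ.filter (fun p : Fin n × Fin n => p.1 < p.2), u (x p.1 - x p.2)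

/-- A pair potential: even, measurable, bounded from below. -/
def IsPairPotential {d : ℕ} (u : (Fin d → ℝ) → EReal) : Prop :=
  Measurable u ∧ (∀ x, u (-x) = u x) ∧ ∃ m : ℝ, ∀ x, (m : EReal) ≤ u x

/-- Stability with constant `B`: `H(x₁,…,xₙ) ≥ -Bn`. -/
def IsStable {d : ℕ} (u : (Fin d → ℝ) → EReal) (B : ℝ) : Prop :=
  ∀ (n : ℕ) (x : Fin n → (Fin d → ℝ)), ((-(B * n) : ℝ) : EReal) ≤ Ham u n x

/-- Mayer function `f_β = e^{-βu} - 1`. -/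
def mayer {d : ℕ} (β : ℝ) (u : (Fin d → ℝ) → EReal) (x : Fin d → ℝ) : ℝ :=
  boltz β (u x) - 1

/-- Regularity: the Mayer function is integrable. -/
def IsRegularPP {d : ℕ} (β : ℝ) (u : (Fin d → ℝ) → EReal) : Prop :=
  Integrable (mayer β u)

/-- `C_β(u) = ∫ |e^{-βu} - 1|`. -/
def Creg {d : ℕ} (β : ℝ) (u : (Fin d → ℝ) → EReal) : ℝ :=
  ∫ x, |mayer β u x|

/-- The cartesian power `Λ^k`. -/
def cube {d : ℕ} (Λ : Set (Fin d → ℝ)) (k : ℕ) : Set (Fin k → (Fin d → ℝ)) :=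
  Set.univ.pi fun _ => Λ

/-- Grand canonical partition function `Ξ_Λ(z)`. -/
def Xi {d : ℕ} (β : ℝ) (u : (Fin d → ℝ) → EReal) (Λ : Set (Fin d → ℝ)) (z : ℂ) : ℂ :=
  ∑' k : ℕ, z ^ k / (Nat.factorial k : ℂ) *
    ((∫ y in cube Λ k, boltz β (Ham u k y) : ℝ) : ℂ)

/-- `θ_Λ^{(n)}(z; x₁,…,xₙ)`. -/
def theta {d : ℕ} (β : ℝ) (u : (Fin d → ℝ) → EReal) (Λ : Set (Fin d → ℝ)) (n : ℕ)
    (z : ℂ) (x : Fin n → (Fin d → ℝ)) : ℂ :=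
  (Xi β u Λ z)⁻¹ * ∑' k : ℕ, z ^ (n + k) / (Nat.factorial k : ℂ) *
    ((∫ y in cube Λ k, boltz β (Ham u (n + k) (Fin.append x y)) : ℝ) : ℂ)

end

/-!
Pinning `x₁, …, xₙ` turns the numerator of `θ_Λ^{(n)}(z; x)` into `zⁿ` times a series
`∑ aₖ zᵏ / k!`, where `aₖ` integrates the Boltzmann factor over `k` further particles, and the
pinned series with `n = 0` is `Ξ_Λ` itself. Stability gives `|aₖ| ≤ C rᵏ`, so every such series is
entire. Differentiating it shifts the coefficients, `aₖ ↦ aₖ₊₁`, and by Fubini `aₖ₊₁` is the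
integral over `x' ∈ Λ` of the `k`-th coefficient with `x'` pinned as well. Hence differentiating a
pinned series amounts to pinning one more point and integrating it over `Λ`; the quotient rule
applied to `θ_Λ^{(n)}(z; x) / zⁿ` does the rest.
-/

section ExponentialGeneratingFunction

open scoped Nat

variable {𝕜 E : Type*} [RCLike 𝕜] [NormedAddCommGroup E] [NormedSpace 𝕜 E]

/-- The exponential generating function `∑ₖ zᵏ / k! • aₖ` of a sequence of vectors. It is only
meaningful where the series converges; bounds `‖aₖ‖ ≤ C rᵏ` make it entire. -/
noncomputable def expGenFun (a : ℕ → E) (z : 𝕜) : E :=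
  ∑' k : ℕ, (z ^ k / (k ! : 𝕜)) • a k

lemma norm_pow_div_factorial_smul_le {C r : ℝ} {k : ℕ} {v : E} (hv : ‖v‖ ≤ C * r ^ k) (z : 𝕜) :
    ‖(z ^ k / (k ! : 𝕜)) • v‖ ≤ C * ((‖z‖ * r) ^ k / k !) :=
  calc ‖(z ^ k / (k ! : 𝕜)) • v‖ = ‖z‖ ^ k / k ! * ‖v‖ := by
        rw [norm_smul, norm_div, norm_pow, RCLike.norm_natCast]
    _ ≤ ‖z‖ ^ k / k ! * (C * r ^ k) := by gcongr
    _ = C * ((‖z‖ * r) ^ k / k !) := by rw [mul_pow]; ring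

lemma hasDerivAt_pow_succ_div_factorial_smul (k : ℕ) (v : E) (z : 𝕜) :
    HasDerivAt (fun w : 𝕜 => (w ^ (k + 1) / ((k + 1)! : 𝕜)) • v) ((z ^ k / (k ! : 𝕜)) • v) z := by
  refine (((hasDerivAt_pow (k + 1) z).div_const _).smul_const v).congr_deriv ?_
  have hk : (k + 1 : 𝕜) ≠ 0 := k.cast_add_one_ne_zero
  rw [Nat.factorial_succ, Nat.add_sub_cancel, Nat.cast_mul, Nat.cast_add_one,
    mul_div_mul_left _ _ hk]

variable [CompleteSpace E] {C r : ℝ}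

lemma summable_pow_div_factorial_smul {a : ℕ → E} (ha : ∀ k, ‖a k‖ ≤ C * r ^ k) (z : 𝕜) :
    Summable fun k : ℕ => (z ^ k / (k ! : 𝕜)) • a k :=
  .of_norm_bounded ((Real.summable_pow_div_factorial (‖z‖ * r)).mul_left C)
    fun k => norm_pow_div_factorial_smul_le (ha k) z

theorem hasDerivAt_expGenFun {a : ℕ → E} (ha : ∀ k, ‖a k‖ ≤ C * r ^ k) (z : 𝕜) :
    HasDerivAt (expGenFun a) (expGenFun (fun k => a (k + 1)) z) z := by
  have hC : 0 ≤ C := by simpa using (norm_nonneg _).trans (ha 0)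
  have ha_succ (k : ℕ) : ‖a (k + 1)‖ ≤ C * |r| * |r| ^ k :=
    calc ‖a (k + 1)‖ ≤ C * r ^ (k + 1) := ha (k + 1)
      _ ≤ C * |r| * |r| ^ k := by
        rw [mul_assoc, ← pow_succ', ← abs_pow]
        gcongr
        exact le_abs_self _
  have expGenFun_eq (w : 𝕜) :
      expGenFun a w = a 0 + ∑' k : ℕ, (w ^ (k + 1) / ((k + 1)! : 𝕜)) • a (k + 1) := by
    rw [expGenFun, (summable_pow_div_factorial_smul ha w).tsum_eq_zero_add]
    simp
  have hz : z ∈ Metric.ball (0 : 𝕜) (‖z‖ + 1) := by simp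
  have hasDerivAt_tail :
      HasDerivAt (fun w : 𝕜 => ∑' k : ℕ, (w ^ (k + 1) / ((k + 1)! : 𝕜)) • a (k + 1))
        (expGenFun (fun k => a (k + 1)) z) z := by
    refine hasDerivAt_tsum_of_isPreconnected
      ((Real.summable_pow_div_factorial ((‖z‖ + 1) * |r|)).mul_left (C * |r|))
      Metric.isOpen_ball (convex_ball _ _).isPreconnected
      (fun k w _ => hasDerivAt_pow_succ_div_factorial_smul k (a (k + 1)) w) (fun k w hw => ?_) hz
      ((summable_nat_add_iff 1).2 (summable_pow_div_factorial_smul ha z)) hz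
    refine (norm_pow_div_factorial_smul_le (ha_succ k) w).trans ?_
    have hw : ‖w‖ ≤ ‖z‖ + 1 := (mem_ball_zero_iff.1 hw).le
    gcongr
  simpa only [funext expGenFun_eq] using hasDerivAt_tail.const_add (a 0)

theorem integral_expGenFun [NormedSpace ℝ E] [SMulCommClass ℝ 𝕜 E] {X : Type*}
    [MeasurableSpace X] {μ : Measure X} [IsFiniteMeasure μ] {a : X → ℕ → E}
    (ha_meas : ∀ k, AEStronglyMeasurable (fun y => a y k) μ)
    (ha : ∀ᵐ y ∂μ, ∀ k, ‖a y k‖ ≤ C * r ^ k) (z : 𝕜) :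
    ∫ y, expGenFun (a y) z ∂μ = expGenFun (fun k => ∫ y, a y k ∂μ) z := by
  have hsum := hasSum_integral_of_dominated_convergence
    (fun k _ => C * ((‖z‖ * r) ^ k / k !)) (fun k => (ha_meas k).const_smul (z ^ k / (k ! : 𝕜)))
    (fun k => ha.mono fun y hy => norm_pow_div_factorial_smul_le (hy k) z)
    (.of_forall fun _ => (Real.summable_pow_div_factorial (‖z‖ * r)).mul_left C)
    (integrable_const _)
    (ha.mono fun y hy => (summable_pow_div_factorial_smul hy z).hasSum)
  simp only [Pi.smul_apply, integral_smul] at hsum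
  exact hsum.tsum_eq.symm

end ExponentialGeneratingFunction

section FiniteTuples

variable {X E : Type*} [MeasurableSpace X] [NormedAddCommGroup E]

lemma measurable_append_left {m k : ℕ} (x : Fin m → X) :
    Measurable fun y : Fin k → X => Fin.append x y := by
  refine measurable_pi_iff.2 (Fin.addCases (fun i => ?_) fun i => ?_)
  · simp only [Fin.append_left, measurable_const]
  · simpa only [Fin.append_right] using measurable_pi_apply i

variable (μ : Measure X) [SigmaFinite μ]

lemma measurePreserving_cons (k : ℕ) :
    MeasurePreserving (fun p : X × (Fin k → X) => (Fin.cons p.1 p.2 : Fin (k + 1) → X))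
      (μ.prod (Measure.pi fun _ => μ)) (Measure.pi fun _ => μ) := by
  simpa only [MeasurableEquiv.piFinSuccAbove_symm_apply, Fin.insertNthEquiv_zero]
    using! (measurePreserving_piFinSuccAbove (fun _ : Fin (k + 1) => μ) 0).symm

variable {μ}

lemma integrable_comp_cons {k : ℕ} {f : (Fin (k + 1) → X) → E}
    (hf : Integrable f (Measure.pi fun _ => μ)) :
    Integrable (fun p : X × (Fin k → X) => f (Fin.cons p.1 p.2))
      (μ.prod (Measure.pi fun _ => μ)) :=
  (measurePreserving_cons μ k).integrable_comp_of_integrable hf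

theorem integral_pi_succ [NormedSpace ℝ E] {k : ℕ} {f : (Fin (k + 1) → X) → E}
    (hf : Integrable f (Measure.pi fun _ => μ)) :
    ∫ y, f y ∂(Measure.pi fun _ => μ) =
      ∫ y, ∫ ys, f (Fin.cons y ys) ∂(Measure.pi fun _ => μ) ∂μ := by
  rw [integral_integral (integrable_comp_cons hf), ← (measurePreserving_cons μ k).map_eq]
  refine integral_map (measurePreserving_cons μ k).aemeasurable ?_
  simpa only [(measurePreserving_cons μ k).map_eq] using hf.aestronglyMeasurable

end FiniteTuples

section BoltzmannFactor

variable {d : ℕ} {β B : ℝ} {u : (Fin d → ℝ) → EReal}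

lemma boltz_nonneg (β : ℝ) (t : EReal) : 0 ≤ boltz β t := by
  unfold boltz
  split_ifs <;> positivity

lemma measurable_boltz (β : ℝ) : Measurable (boltz β) :=
  .ite (measurableSet_singleton _) measurable_const
    (Real.measurable_exp.comp (measurable_const.mul measurable_ereal_toReal))

lemma boltz_le_exp (hβ : 0 ≤ β) {c : ℝ} {t : EReal} (hct : (c : EReal) ≤ t) :
    boltz β t ≤ Real.exp (-β * c) := by
  unfold boltz
  split_ifs with ht
  · positivity
  · have hc : c ≤ t.toReal := by
      simpa only [EReal.toReal_coe] using EReal.toReal_le_toReal hct (EReal.coe_ne_bot c) ht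
    exact Real.exp_le_exp.2 (mul_le_mul_of_nonpos_left hc (neg_nonpos.2 hβ))

lemma measurable_Ham (hu : Measurable u) (n : ℕ) : Measurable (Ham u n) :=
  Finset.measurable_fun_sum _ fun p _ =>
    hu.comp ((measurable_pi_apply p.1).sub (measurable_pi_apply p.2))

lemma Ham_comp_cast (u : (Fin d → ℝ) → EReal) {m n : ℕ} (h : m = n) (x : Fin n → (Fin d → ℝ)) :
    Ham u m (x ∘ Fin.cast h) = Ham u n x := by
  subst h
  rfl

lemma norm_boltz_Ham_le (hβ : 0 ≤ β) (hstab : IsStable u B) (n : ℕ) (x : Fin n → (Fin d → ℝ)) :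
    ‖boltz β (Ham u n x)‖ ≤ Real.exp (β * B) ^ n :=
  calc ‖boltz β (Ham u n x)‖ = boltz β (Ham u n x) := Real.norm_of_nonneg (boltz_nonneg _ _)
    _ ≤ Real.exp (-β * -(B * n)) := boltz_le_exp hβ (hstab n x)
    _ = Real.exp (β * B) ^ n := by rw [← Real.exp_nat_mul]; ring_nf

end BoltzmannFactor

section PinnedPartitionFunction

variable {d n : ℕ} {β B : ℝ} {u : (Fin d → ℝ) → EReal} {Λ : Set (Fin d → ℝ)}

/-- The canonical configuration integral of `k` free particles in `Λ` interacting with each other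
and with particles pinned at `x₁, …, xₙ`; the factor `1 / k!` is left to `pinnedXi`. -/
noncomputable def pinnedIntegral (β : ℝ) (u : (Fin d → ℝ) → EReal) (Λ : Set (Fin d → ℝ))
    (x : Fin n → (Fin d → ℝ)) (k : ℕ) : ℝ :=
  ∫ y in cube Λ k, boltz β (Ham u (n + k) (Fin.append x y))

/-- The grand canonical partition function in the presence of particles pinned at `x₁, …, xₙ`.
The pinned particles carry no activity, so the numerator of `theta` is `zⁿ` times this series. -/
noncomputable def pinnedXi (β : ℝ) (u : (Fin d → ℝ) → EReal) (Λ : Set (Fin d → ℝ))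
    (x : Fin n → (Fin d → ℝ)) (z : ℂ) : ℂ :=
  expGenFun (fun k => (pinnedIntegral β u Λ x k : ℂ)) z

lemma Xi_eq_pinnedXi (β : ℝ) (u : (Fin d → ℝ) → EReal) (Λ : Set (Fin d → ℝ)) :
    Xi β u Λ = pinnedXi β u Λ Fin.elim0 := by
  funext z
  simp only [Xi, pinnedXi, expGenFun, pinnedIntegral, smul_eq_mul, Fin.elim0_append, Ham_comp_cast]

lemma theta_eq (β : ℝ) (u : (Fin d → ℝ) → EReal) (Λ : Set (Fin d → ℝ)) (z : ℂ)
    (x : Fin n → (Fin d → ℝ)) :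
    theta β u Λ n z x = z ^ n / Xi β u Λ z * pinnedXi β u Λ x z := by
  simp only [theta, pinnedXi, expGenFun, pinnedIntegral, smul_eq_mul, pow_add, mul_div_assoc,
    mul_assoc, tsum_mul_left]
  ring

lemma theta_div_pow (β : ℝ) (u : (Fin d → ℝ) → EReal) (Λ : Set (Fin d → ℝ)) {z : ℂ} (hz : z ≠ 0)
    (x : Fin n → (Fin d → ℝ)) :
    theta β u Λ n z x / z ^ n = pinnedXi β u Λ x z / Xi β u Λ z := by
  rw [theta_eq]
  field_simp

lemma volume_restrict_cube (Λ : Set (Fin d → ℝ)) (k : ℕ) :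
    volume.restrict (cube Λ k) = Measure.pi fun _ => volume.restrict Λ :=
  Measure.restrict_pi_pi _ _

lemma volume_cube (Λ : Set (Fin d → ℝ)) (k : ℕ) : volume (cube Λ k) = volume Λ ^ k := by
  rw [cube, volume_pi_pi, Finset.prod_const, Finset.card_fin]

lemma volume_cube_lt_top (hΛ : volume Λ ≠ ⊤) (k : ℕ) : volume (cube Λ k) < ⊤ := by
  rw [volume_cube]
  exact ENNReal.pow_lt_top hΛ.lt_top

lemma abs_pinnedIntegral_le (hβ : 0 ≤ β) (hstab : IsStable u B) (hΛ : volume Λ ≠ ⊤)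
    (x : Fin n → (Fin d → ℝ)) (k : ℕ) :
    |pinnedIntegral β u Λ x k| ≤
      Real.exp (β * B) ^ n * (Real.exp (β * B) * volume.real Λ) ^ k :=
  calc |pinnedIntegral β u Λ x k|
      ≤ Real.exp (β * B) ^ (n + k) * volume.real (cube Λ k) :=
        norm_setIntegral_le_of_norm_le_const (volume_cube_lt_top hΛ k)
          fun _ _ => norm_boltz_Ham_le hβ hstab _ _
    _ = Real.exp (β * B) ^ n * (Real.exp (β * B) * volume.real Λ) ^ k := by
        rw [measureReal_def, volume_cube, ENNReal.toReal_pow, ← measureReal_def, pow_add, mul_pow,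
          mul_assoc]

lemma integrable_boltz_Ham_append (hβ : 0 ≤ β) (hu : Measurable u) (hstab : IsStable u B)
    (hΛ : volume Λ ≠ ⊤) (x : Fin n → (Fin d → ℝ)) (k : ℕ) :
    Integrable (fun y : Fin k → (Fin d → ℝ) => boltz β (Ham u (n + k) (Fin.append x y)))
      (Measure.pi fun _ => volume.restrict Λ) := by
  have : IsFiniteMeasure (volume.restrict Λ) := isFiniteMeasure_restrict.2 hΛ
  have hmeas : Measurable fun y : Fin k → (Fin d → ℝ) =>
      boltz β (Ham u (n + k) (Fin.append x y)) :=
    (measurable_boltz β).comp ((measurable_Ham hu _).comp (measurable_append_left x))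
  exact .of_bound hmeas.aestronglyMeasurable (Real.exp (β * B) ^ (n + k))
    (.of_forall fun _ => norm_boltz_Ham_le hβ hstab _ _)

lemma pinnedIntegral_snoc (β : ℝ) (u : (Fin d → ℝ) → EReal) (Λ : Set (Fin d → ℝ))
    (x : Fin n → (Fin d → ℝ)) (y : Fin d → ℝ) (k : ℕ) :
    pinnedIntegral β u Λ (Fin.snoc x y : Fin (n + 1) → (Fin d → ℝ)) k =
      ∫ ys in cube Λ k, boltz β (Ham u (n + (k + 1)) (Fin.append x (Fin.cons y ys))) := by
  simp only [pinnedIntegral, Fin.append_left_snoc, Ham_comp_cast]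

lemma integrableOn_pinnedIntegral_snoc (hβ : 0 ≤ β) (hu : Measurable u) (hstab : IsStable u B)
    (hΛ : volume Λ ≠ ⊤) (x : Fin n → (Fin d → ℝ)) (k : ℕ) :
    IntegrableOn
      (fun y => pinnedIntegral β u Λ (Fin.snoc x y : Fin (n + 1) → (Fin d → ℝ)) k) Λ := by
  simpa only [IntegrableOn, pinnedIntegral_snoc, volume_restrict_cube] using
    (integrable_comp_cons
      (integrable_boltz_Ham_append hβ hu hstab hΛ x (k + 1))).integral_prod_left

lemma pinnedIntegral_succ (hβ : 0 ≤ β) (hu : Measurable u) (hstab : IsStable u B)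
    (hΛ : volume Λ ≠ ⊤) (x : Fin n → (Fin d → ℝ)) (k : ℕ) :
    pinnedIntegral β u Λ x (k + 1) =
      ∫ y in Λ, pinnedIntegral β u Λ (Fin.snoc x y : Fin (n + 1) → (Fin d → ℝ)) k := by
  simp only [pinnedIntegral_snoc]
  simpa only [pinnedIntegral, volume_restrict_cube] using
    integral_pi_succ (integrable_boltz_Ham_append hβ hu hstab hΛ x (k + 1))

theorem hasDerivAt_pinnedXi (hβ : 0 ≤ β) (hu : Measurable u) (hstab : IsStable u B)
    (hΛ : volume Λ ≠ ⊤) (x : Fin n → (Fin d → ℝ)) (z : ℂ) :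
    HasDerivAt (pinnedXi β u Λ x)
      (∫ y in Λ, pinnedXi β u Λ (Fin.snoc x y : Fin (n + 1) → (Fin d → ℝ)) z) z := by
  have : IsFiniteMeasure (volume.restrict Λ) := isFiniteMeasure_restrict.2 hΛ
  have norm_coeff_le {m : ℕ} (x : Fin m → (Fin d → ℝ)) (k : ℕ) :
      ‖(pinnedIntegral β u Λ x k : ℂ)‖ ≤
        Real.exp (β * B) ^ m * (Real.exp (β * B) * volume.real Λ) ^ k :=
    (Complex.norm_real _).trans_le (abs_pinnedIntegral_le hβ hstab hΛ x k)
  have integral_pinnedXi_snoc :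
      ∫ y in Λ, pinnedXi β u Λ (Fin.snoc x y : Fin (n + 1) → (Fin d → ℝ)) z =
        expGenFun (fun k => (pinnedIntegral β u Λ x (k + 1) : ℂ)) z := by
    simp only [pinnedIntegral_succ hβ hu hstab hΛ x, ← integral_complex_ofReal]
    exact integral_expGenFun
      (fun k => (integrableOn_pinnedIntegral_snoc hβ hu hstab hΛ x k).ofReal.aestronglyMeasurable)
      (.of_forall fun y => norm_coeff_le (Fin.snoc x y)) z
  rw [integral_pinnedXi_snoc]
  exact hasDerivAt_expGenFun (norm_coeff_le x) z

lemma hasDerivAt_Xi (hβ : 0 ≤ β) (hu : Measurable u) (hstab : IsStable u B)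
    (hΛ : volume Λ ≠ ⊤) (z : ℂ) :
    HasDerivAt (Xi β u Λ) (∫ y in Λ, pinnedXi β u Λ (fun _ : Fin 1 => y) z) z := by
  simpa only [Xi_eq_pinnedXi, Fin.snoc_zero]
    using hasDerivAt_pinnedXi hβ hu hstab hΛ Fin.elim0 z

end PinnedPartitionFunction

theorem statement7_general {d n : ℕ} {β B : ℝ} (hβ : 0 ≤ β) {u : (Fin d → ℝ) → EReal}
    (hu : Measurable u) (hstab : IsStable u B) {Λ : Set (Fin d → ℝ)} (hΛ : volume Λ ≠ ⊤)
    (x : Fin n → (Fin d → ℝ)) {z : ℂ} (hz0 : z ≠ 0) (hXi : Xi β u Λ z ≠ 0) :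
    ∃ D : ℂ, HasDerivAt (fun w : ℂ => theta β u Λ n w x / w ^ n) D z ∧
      z ^ (n + 1) * D =
        (∫ y in Λ, theta β u Λ (n + 1) z (Fin.snoc x y)) -
          theta β u Λ n z x * ∫ y in Λ, theta β u Λ 1 z (fun _ => y) := by
  have hquot := (hasDerivAt_pinnedXi hβ hu hstab hΛ x z).div (hasDerivAt_Xi hβ hu hstab hΛ z) hXi
  have htheta : (fun w : ℂ => theta β u Λ n w x / w ^ n) =ᶠ[nhds z]
      pinnedXi β u Λ x / Xi β u Λ :=
    (eventually_ne_nhds hz0).mono fun w hw => theta_div_pow β u Λ hw x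
  refine ⟨_, hquot.congr_of_eventuallyEq htheta, ?_⟩
  simp only [theta_eq, integral_const_mul]
  field_simp
  ring

/-- for `0 < |z| < z₀` the function `w ↦ θ_Λ^{(n)}(w;x)/wⁿ` is
differentiable at `z` and
`z^{n+1} (θ_Λ^{(n)}(z;x)/zⁿ)' = ∫_Λ θ_Λ^{(n+1)}(z;x,x') dx' - θ_Λ^{(n)}(z;x) ∫_Λ θ_Λ^{(1)}(z;x') dx'`. -/
theorem statement7 {d : ℕ} (hd : 1 ≤ d) (β B : ℝ) (hβ : 0 < β) (hB : 0 ≤ B)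
    (u : (Fin d → ℝ) → EReal) (hu : IsPairPotential u)
    (hstab : IsStable u B) (hreg : IsRegularPP β u)
    (Λ : Set (Fin d → ℝ)) (hΛb : IsBounded Λ) (hΛm : MeasurableSet Λ)
    (hXi : ∀ w : ℂ, ‖w‖ * (Real.exp (2 * β * B + 1) * Creg β u) < 1 →
      Xi β u Λ w ≠ 0)
    (n : ℕ) (hn : 1 ≤ n) (x : Fin n → (Fin d → ℝ)) (hx : ∀ i, x i ∈ Λ)
    (z : ℂ) (hz0 : z ≠ 0)
    (hz : ‖z‖ * (Real.exp (2 * β * B + 1) * Creg β u) < 1) :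
    ∃ D : ℂ, HasDerivAt (fun w : ℂ => theta β u Λ n w x / w ^ n) D z ∧
      z ^ (n + 1) * D =
        (∫ y in Λ, theta β u Λ (n + 1) z (Fin.snoc x y)) -
          theta β u Λ n z x * ∫ y in Λ, theta β u Λ 1 z (fun _ => y) := by
  exact statement7_general hβ.le hu.1 hstab hΛb.measure_lt_top.ne x hz0 (hXi z hz)
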